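/- arXiv:2005.12355 — 5 statements merged into one kernel-verified Lean document; each statement's English description precedes it below -/
import Mathlib

section
/- I(F) is a P-ideal: for every sequence (A_k) of sets with A_k ∈ I(F) for every k, there exists a set A ∈ I(F) such that A_k \ A is finite for every k. -/
open Filter

/-- `mu F n A = |A ∩ F n| / |F n|`. -/
noncomputable def mu (F : ℕ → Finset ℕ) (n : ℕ) (A : Set ℕ) : ℝ :=
  (A ∩ (F n : Set ℕ)).ncard / (F n).card

theorem mu_nonneg_aux (F : ℕ → Finset ℕ) (n : ℕ) (A : Set ℕ) : 0 ≤ mu F n A := by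
  unfold mu; positivity

theorem mu_mono_aux (F : ℕ → Finset ℕ) (n : ℕ) {A B : Set ℕ}
    (h : A ∩ (F n : Set ℕ) ⊆ B) : mu F n A ≤ mu F n B := by
  unfold mu
  gcongr ?_ / _
  exact_mod_cast Set.ncard_le_ncard (Set.subset_inter h Set.inter_subset_right)
    ((F n).finite_toSet.subset Set.inter_subset_right)

theorem mu_union_aux (F : ℕ → Finset ℕ) (n : ℕ) (A B : Set ℕ) :
    mu F n (A ∪ B) ≤ mu F n A + mu F n B := by
  unfold mu
  rw [← add_div, Set.union_inter_distrib_right]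
  gcongr ?_ / _
  exact_mod_cast Set.ncard_union_le _ _

theorem exists_cum_aux (F : ℕ → Finset ℕ) (A : ℕ → Set ℕ)
    (hA : ∀ k, Tendsto (fun n => mu F n (A k)) atTop (nhds 0)) (k : ℕ) :
    Tendsto (fun n => mu F n (⋃ j ≤ k, A j)) atTop (nhds 0) := by
  induction k with
  | zero => simpa using hA 0
  | succ k ih =>
    refine squeeze_zero (fun n => mu_nonneg_aux _ _ _) (fun n => ?_)
      (by simpa using ih.add (hA (k+1)))
    refine le_trans (mu_mono_aux F n ?_) (mu_union_aux F n _ _)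
    rintro x ⟨hx, -⟩
    simp only [Set.mem_iUnion, Set.mem_union] at hx ⊢
    obtain ⟨j, hj, hx⟩ := hx
    rcases Nat.le_succ_iff.mp hj with h | h
    · exact Or.inl ⟨j, h, hx⟩
    · subst h; exact Or.inr hx

/-- `I(F)` is a P-ideal: for every sequence `(A k)` of members of `I(F)` there is
`A ∈ I(F)` with `A k \ A` finite for every `k`. -/
theorem stmt1 (F : ℕ → Finset ℕ) (hne : ∀ n, (F n).Nonempty)
    (hcard : Tendsto (fun n => (F n).card) atTop atTop)
    (A : ℕ → Set ℕ)
    (hA : ∀ k, Tendsto (fun n => mu F n (A k)) atTop (nhds 0)) :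
    ∃ B : Set ℕ, Tendsto (fun n => mu F n B) atTop (nhds 0) ∧
      ∀ k, (A k \ B).Finite := by
  have h1 : ∀ k : ℕ, ∃ N : ℕ, ∀ n ≥ N, mu F n (⋃ j ≤ k, A j) < 1 / ((k : ℝ) + 1) := fun k =>
    eventually_atTop.mp ((exists_cum_aux F A hA k).eventually_lt_const (by positivity))
  choose N hN using h1
  refine ⟨⋃ k, (A k \ ⋃ m ∈ Finset.range (max (N k) k), (F m : Set ℕ)), ?_, ?_⟩
  · rw [Metric.tendsto_atTop]
    intro ε hε
    obtain ⟨K, hK⟩ := exists_nat_one_div_lt hε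
    refine ⟨max (N K) K, fun n hn => ?_⟩
    rw [Real.dist_eq, sub_zero, abs_of_nonneg (mu_nonneg_aux _ _ _)]
    set L := Nat.findGreatest (fun k => N k ≤ n) n with hL
    have hKn : K ≤ n := le_trans (le_max_right _ _) hn
    have hNn : N K ≤ n := le_trans (le_max_left _ _) hn
    have hKL : K ≤ L := Nat.le_findGreatest hKn hNn
    have hNL : N L ≤ n := Nat.findGreatest_spec (P := fun k => N k ≤ n) hKn hNn
    have h2 : (1 : ℝ) / ((L : ℝ) + 1) ≤ 1 / ((K : ℝ) + 1) := by gcongr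
    refine lt_of_le_of_lt (mu_mono_aux F n ?_) ((hN L n hNL).trans_le h2 |>.trans hK)
    rintro x ⟨hx, hxF⟩
    simp only [Set.mem_iUnion, Set.mem_diff, Finset.mem_range, not_exists] at hx ⊢
    obtain ⟨k, hxk, hx⟩ := hx
    have h3 : max (N k) k ≤ n := not_lt.mp fun h => hx n h hxF
    exact ⟨k, Nat.le_findGreatest ((le_max_right _ _).trans h3) ((le_max_left _ _).trans h3), hxk⟩
  · intro k
    refine Set.Finite.subset (s := ⋃ m ∈ Finset.range (max (N k) k), (F m : Set ℕ))
      ((Finset.range _).finite_toSet.biUnion fun m _ => (F m).finite_toSet) ?_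
    rintro x ⟨hx, hxB⟩
    by_contra h
    exact hxB (Set.mem_iUnion.mpr ⟨k, hx, h⟩)
end

section
/- Let F_n = [n!, n! + n] ∩ ℕ for each n ≥ 1 and let A = ⋃_n F_n. Then A has natural density zero (i.e. |A ∩ {0,1,…,n}|/(n+1) → 0 as n → ∞), while μ_n(A) = 1 for every n; in particular A belongs to the density zero ideal Z but A ∉ I(F), so I(F) ≠ Z. -/
open Filter

/-- For `F n = [n!, n! + n]` and `A = ⋃ n, F n`: `A` has natural density zero,
`μ_n(A) = 1` for every `n`, `A ∉ I(F)`, and hence `I(F) ≠ Z`. -/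
theorem stmt3 (F : ℕ → Finset ℕ) (hF : ∀ n, F n = Finset.Icc n.factorial (n.factorial + n))
    (A : Set ℕ) (hA : A = ⋃ n, (F n : Set ℕ)) :
    Tendsto (fun n => mu (fun m => Finset.range (m + 1)) n A) atTop (nhds 0) ∧
    (∀ n, mu F n A = 1) ∧
    ¬ Tendsto (fun n => mu F n A) atTop (nhds 0) ∧
    {B : Set ℕ | Tendsto (fun n => mu F n B) atTop (nhds 0)} ≠
      {B : Set ℕ | Tendsto (fun n => mu (fun m => Finset.range (m + 1)) n B) atTop (nhds 0)} := by
  have h1 : Tendsto (fun n => mu (fun m => Finset.range (m + 1)) n A) atTop (nhds 0) := by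
    let k : ℕ → ℕ := fun N => Nat.findGreatest (fun j => j.factorial ≤ N) N
    have hk : ∀ N j, j.factorial ≤ N → j ≤ k N := fun N j h =>
      Nat.le_findGreatest ((Nat.self_le_factorial j).trans h) h
    have hkt : Tendsto k atTop atTop := by
      rw [tendsto_atTop]
      intro b
      filter_upwards [eventually_ge_atTop b.factorial] with N hN
      exact hk N b hN
    have hg : Tendsto (fun n : ℕ => (4 : ℝ) ^ n / (n.factorial : ℝ)) atTop (nhds 0) :=
      FloorSemiring.tendsto_pow_div_factorial_atTop 4
    refine squeeze_zero' (Eventually.of_forall fun N => ?_) ?_ (hg.comp hkt)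
    · unfold mu
      positivity
    · filter_upwards [eventually_ge_atTop 1] with N hN
      have hkN : (k N).factorial ≤ N :=
        Nat.findGreatest_spec (P := fun j => j.factorial ≤ N) (Nat.zero_le N) (by simpa using hN)
      have hsub : A ∩ ((Finset.range (N + 1) : Finset ℕ) : Set ℕ) ⊆
          (((Finset.range (k N + 1)).biUnion F : Finset ℕ) : Set ℕ) := by
        rintro x ⟨hx, hxN⟩
        rw [hA] at hx
        obtain ⟨j, hj⟩ := Set.mem_iUnion.1 hx
        have hj2 := hj
        rw [hF j] at hj2
        simp only [Finset.coe_Icc, Set.mem_Icc] at hj2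
        simp only [Finset.coe_range, Set.mem_Iio] at hxN
        have := hk N j (by omega)
        rw [Finset.mem_coe, Finset.mem_biUnion]
        exact ⟨j, Finset.mem_range.2 (by omega), hj⟩
      have hc : (A ∩ ((Finset.range (N + 1) : Finset ℕ) : Set ℕ)).ncard ≤ 4 ^ (k N) := by
        calc _ ≤ ((Finset.range (k N + 1)).biUnion F).card := by
              rw [← Set.ncard_coe_finset]
              exact Set.ncard_le_ncard hsub (Finset.finite_toSet _)
          _ ≤ (Finset.range (k N + 1)).card * (k N + 1) := by
              apply Finset.card_biUnion_le_card_mul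
              intro j hj
              rw [Finset.mem_range] at hj
              rw [hF j, Nat.card_Icc]
              omega
          _ ≤ 2 ^ (k N) * 2 ^ (k N) := by
              rw [Finset.card_range]
              have : k N + 1 ≤ 2 ^ (k N) := Nat.lt_two_pow_self
              gcongr
          _ = 4 ^ (k N) := by rw [← mul_pow]; norm_num
      unfold mu
      simp only [Function.comp, Finset.card_range]
      have hc' : ((A ∩ ((Finset.range (N + 1) : Finset ℕ) : Set ℕ)).ncard : ℝ) ≤ 4 ^ (k N) := by
        exact_mod_cast hc
      have : ((k N).factorial : ℝ) ≤ ((N + 1 : ℕ) : ℝ) := by exact_mod_cast (by omega)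
      gcongr
  have h2 : ∀ n, mu F n A = 1 := by
    intro n
    have hs : A ∩ (F n : Set ℕ) = (F n : Set ℕ) := by
      rw [Set.inter_eq_right, hA]
      exact Set.subset_iUnion (fun n => (F n : Set ℕ)) n
    unfold mu
    rw [hs, Set.ncard_coe_finset]
    apply div_self
    rw [hF n, Nat.card_Icc]
    have : n.factorial + n + 1 - n.factorial ≠ 0 := by omega
    exact_mod_cast this
  have h3 : ¬ Tendsto (fun n => mu F n A) atTop (nhds 0) := by
    simp only [h2]
    intro h
    exact one_ne_zero (tendsto_nhds_unique tendsto_const_nhds h)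
  refine ⟨h1, h2, h3, fun h => h3 ?_⟩
  have : A ∈ {B : Set ℕ | Tendsto (fun n => mu F n B) atTop (nhds 0)} := by
    rw [h]
    exact h1
  exact this
end

section
/- There exists a partition (G_n)_{n∈ℕ} of ℕ into pairwise disjoint sets with ⋃_n G_n = ℕ such that limsup_{k→∞} μ_k(G_n) > 0 for every n, and limsup_{k→∞} μ_k(⋃_{j>n} G_j) → 0 as n → ∞. -/
open Filter

lemma mu_nonneg (F : ℕ → Finset ℕ) (k : ℕ) (A : Set ℕ) : 0 ≤ mu F k A := by
  unfold mu; positivity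

lemma mu_mono (F : ℕ → Finset ℕ) (k : ℕ) {A B : Set ℕ} (h : A ⊆ B) : mu F k A ≤ mu F k B := by
  unfold mu
  have : (A ∩ (F k : Set ℕ)).ncard ≤ (B ∩ (F k : Set ℕ)).ncard :=
    Set.ncard_le_ncard (Set.inter_subset_inter_left _ h) ((F k).finite_toSet.inter_of_right _)
  gcongr

lemma mu_univ (F : ℕ → Finset ℕ) (hne : ∀ n, (F n).Nonempty) (k : ℕ) :
    mu F k Set.univ = 1 := by
  unfold mu
  have : ((F k).card : ℝ) ≠ 0 := by exact_mod_cast (hne k).card_pos.ne'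
  simp [Set.ncard_coe_finset, this]

lemma mu_le_one (F : ℕ → Finset ℕ) (hne : ∀ n, (F n).Nonempty) (k : ℕ) (A : Set ℕ) :
    mu F k A ≤ 1 := (mu_mono F k (Set.subset_univ A)).trans (mu_univ F hne k).le

lemma mu_union_le (F : ℕ → Finset ℕ) (k : ℕ) (A B : Set ℕ) :
    mu F k (A ∪ B) ≤ mu F k A + mu F k B := by
  unfold mu
  rw [← add_div]
  have : ((A ∪ B) ∩ (F k : Set ℕ)).ncard ≤ (A ∩ (F k : Set ℕ)).ncard + (B ∩ (F k : Set ℕ)).ncard := by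
    rw [Set.union_inter_distrib_right]; exact Set.ncard_union_le _ _
  have h2 : (((A ∪ B) ∩ (F k : Set ℕ)).ncard : ℝ)
    ≤ (A ∩ (F k : Set ℕ)).ncard + (B ∩ (F k : Set ℕ)).ncard := by exact_mod_cast this
  gcongr

lemma mu_bdd (F : ℕ → Finset ℕ) (hne : ∀ n, (F n).Nonempty) (A : Set ℕ) :
    IsBoundedUnder (· ≤ ·) atTop (fun k => mu F k A) :=
  isBoundedUnder_of ⟨1, fun k => mu_le_one F hne k A⟩

lemma mu_cobdd (F : ℕ → Finset ℕ) (A : Set ℕ) :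
    IsCoboundedUnder (· ≤ ·) atTop (fun k => mu F k A) :=
  (isBoundedUnder_of ⟨0, fun k => mu_nonneg F k A⟩ :
    IsBoundedUnder (· ≥ ·) atTop (fun k => mu F k A)).isCoboundedUnder_le

lemma mu_finite (F : ℕ → Finset ℕ)
    (hcard : Tendsto (fun n => (F n).card) atTop atTop) (R : Set ℕ) (hR : R.Finite) :
    Tendsto (fun k => mu F k R) atTop (nhds 0) := by
  have h1 : Tendsto (fun k => (R.ncard : ℝ) / ((F k).card : ℝ)) atTop (nhds 0) :=
    (tendsto_natCast_atTop_atTop.comp hcard).const_div_atTop _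
  refine squeeze_zero (fun k => mu_nonneg F k R) (fun k => ?_) h1
  unfold mu
  have : (R ∩ (F k : Set ℕ)).ncard ≤ R.ncard := Set.ncard_le_ncard Set.inter_subset_left hR
  gcongr

lemma key (F : ℕ → Finset ℕ) (hne : ∀ n, (F n).Nonempty)
    (hcard : Tendsto (fun n => (F n).card) atTop atTop) (T : Set ℕ)
    (hT : 0 < limsup (fun k => mu F k T) atTop) (ε : ℝ) (hε : 0 < ε) :
    ∃ S ⊆ T, (0 < limsup (fun k => mu F k S) atTop) ∧ ∀ k, mu F k S ≤ ε := by
  obtain ⟨S, hS⟩ := zorn_subset {S : Set ℕ | S ⊆ T ∧ ∀ k, mu F k S ≤ ε} (by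
    intro c hc hchain
    rcases c.eq_empty_or_nonempty with rfl | hcne
    · exact ⟨∅, ⟨by simp, fun k => by simp [mu, hε.le]⟩, by simp⟩
    refine ⟨⋃₀ c, ⟨Set.sUnion_subset fun s hs => (hc hs).1, fun k => ?_⟩,
      fun s hs => Set.subset_sUnion_of_mem hs⟩
    obtain ⟨s, hs, hsub⟩ := DirectedOn.exists_mem_subset_of_finite_of_subset_sUnion hcne
      hchain.directedOn (s := ⋃₀ c ∩ (F k : Set ℕ)) ((F k).finite_toSet.inter_of_right _)
      Set.inter_subset_left
    refine le_trans ?_ ((hc hs).2 k)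
    have : mu F k (⋃₀ c) = mu F k (⋃₀ c ∩ (F k : Set ℕ)) := by
      unfold mu; rw [Set.inter_assoc, Set.inter_self]
    rw [this]
    exact mu_mono F k hsub)
  refine ⟨S, hS.prop.1, ?_, hS.prop.2⟩
  by_contra hneg
  push Not at hneg
  set d := limsup (fun k => mu F k T) atTop with hd
  have e1 : ∀ δ : ℝ, 0 < δ → ∀ᶠ k in atTop, mu F k S < δ := fun δ hδ =>
    eventually_lt_of_limsup_lt (hneg.trans_lt hδ) (mu_bdd F hne S)
  have hc' : Tendsto (fun k => ((F k).card : ℝ)) atTop atTop :=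
    tendsto_natCast_atTop_atTop.comp hcard
  obtain ⟨K, hK⟩ := eventually_atTop.1 ((e1 (ε / 2) (by positivity)).and
    (hc'.eventually_ge_atTop (2 / ε)))
  have hfin : (T \ S).Finite := by
    refine ((Finset.range K).biUnion F).finite_toSet.subset ?_
    rintro x ⟨hxT, hxS⟩
    by_contra hx
    have hx' : ∀ k < K, x ∉ F k := by simpa using hx
    have : insert x S ⊆ S := by
      refine hS.le_of_ge ⟨Set.insert_subset hxT hS.prop.1, fun k => ?_⟩ (Set.subset_insert x S)
      by_cases hxk : x ∈ F k
      · have hk : K ≤ k := by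
          by_contra h
          exact hx' k (by omega) hxk
        obtain ⟨h1, h2⟩ := hK k hk
        have h3 : mu F k {x} ≤ ε / 2 := by
          unfold mu
          have : ({x} ∩ (F k : Set ℕ)).ncard ≤ 1 := by
            simpa using Set.ncard_le_ncard (Set.inter_subset_left : {x} ∩ (F k : Set ℕ) ⊆ {x})
          have h4 : (({x} ∩ (F k : Set ℕ)).ncard : ℝ) ≤ 1 := by exact_mod_cast this
          have hpos : (0 : ℝ) < (F k).card := by exact_mod_cast (hne k).card_pos
          rw [div_le_iff₀ hpos]
          rw [div_le_iff₀ hε] at h2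
          linarith
        have := mu_union_le F k {x} S
        rw [Set.singleton_union] at this
        linarith
      · have : mu F k (insert x S) = mu F k S := by
          unfold mu
          rw [Set.insert_inter_of_notMem (by simpa using hxk)]
        rw [this]
        exact hS.prop.2 k
    exact hxS (this (Set.mem_insert x S))
  have e2 : ∀ᶠ k in atTop, mu F k (T \ S) < d / 4 :=
    (mu_finite F hcard _ hfin).eventually_lt_const (by positivity)
  have e3 : limsup (fun k => mu F k T) atTop ≤ d / 2 := by
    refine limsup_le_of_le (mu_cobdd F T) ?_
    filter_upwards [e1 (d / 4) (by positivity), e2] with k h1 h2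
    have := mu_union_le F k S (T \ S)
    rw [Set.union_sdiff_cancel hS.prop.1] at this
    linarith
  linarith

theorem stmt7 (F : ℕ → Finset ℕ) (hne : ∀ n, (F n).Nonempty)
    (hcard : Tendsto (fun n => (F n).card) atTop atTop) :
    ∃ G : ℕ → Set ℕ,
      Pairwise (Function.onFun Disjoint G) ∧
      (⋃ n, G n) = Set.univ ∧
      (∀ n, 0 < limsup (fun k => mu F k (G n)) atTop) ∧
      Tendsto (fun n => limsup (fun k => mu F k (⋃ j, ⋃ (_ : n < j), G j)) atTop)
        atTop (nhds 0) := by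
  have hstep : ∀ A : {A : Set ℕ // 0 < limsup (fun k => mu F k A) atTop},
      ∃ B : {A : Set ℕ // 0 < limsup (fun k => mu F k A) atTop}, B.1 ⊆ A.1 ∧
        ∀ k, mu F k B.1 ≤ limsup (fun k => mu F k A.1) atTop / 2 := by
    rintro ⟨A, hA⟩
    obtain ⟨S, h1, h2, h3⟩ := key F hne hcard A hA _ (half_pos hA)
    exact ⟨⟨S, h2⟩, h1, h3⟩
  choose f hf1 hf2 using hstep
  let U : {A : Set ℕ // 0 < limsup (fun k => mu F k A) atTop} :=
    ⟨Set.univ, by simp [mu_univ F hne]⟩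
  let T : ℕ → Set ℕ := fun n => (f^[n] U).1
  have hT0 : T 0 = Set.univ := rfl
  have hpos : ∀ n, 0 < limsup (fun k => mu F k (T n)) atTop := fun n => (f^[n] U).2
  have hsub : ∀ n, T (n + 1) ⊆ T n := fun n => by
    simp only [T, Function.iterate_succ_apply']; exact hf1 _
  have hmu : ∀ n k, mu F k (T (n + 1)) ≤ limsup (fun k => mu F k (T n)) atTop / 2 := fun n => by
    simp only [T, Function.iterate_succ_apply']; exact hf2 _
  have hanti : Antitone T := antitone_nat_of_succ_le hsub
  clear_value T
  have hlim : ∀ n, limsup (fun k => mu F k (T n)) atTop ≤ (1 / 2 : ℝ) ^ n := by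
    intro n
    induction n with
    | zero => simp [hT0, mu_univ F hne]
    | succ n ih =>
      refine limsup_le_of_le (mu_cobdd F _) (Eventually.of_forall fun k => ?_)
      have := hmu n k
      rw [pow_succ]; linarith
  have hGsub : ∀ n, T n \ T (n + 1) ⊆ (T n \ T (n + 1)) ∪ {x | n = 0 ∧ ∀ m, x ∈ T m} :=
    fun n => Set.subset_union_left
  refine ⟨fun n => (T n \ T (n + 1)) ∪ {x | n = 0 ∧ ∀ m, x ∈ T m}, ?_, ?_, ?_, ?_⟩
  · refine (pairwise_disjoint_on _).2 ?_
    intro m n hmn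
    rw [Set.disjoint_left]
    rintro x (⟨_, h2⟩ | ⟨_, h2⟩) (⟨h3, h4⟩ | ⟨h3, _⟩)
    · exact h2 (hanti (show m + 1 ≤ n from hmn) h3)
    · omega
    · exact h4 (h2 _)
    · omega
  · refine Set.eq_univ_of_forall fun x => ?_
    rw [Set.mem_iUnion]
    by_cases hx : ∀ m, x ∈ T m
    · exact ⟨0, Or.inr ⟨rfl, hx⟩⟩
    · push Not at hx
      classical
      have h1 := Nat.find_spec hx
      have h0 : Nat.find hx ≠ 0 := fun h => by
        rw [h, hT0] at h1; exact h1 trivial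
      obtain ⟨n, hn⟩ := Nat.exists_eq_succ_of_ne_zero h0
      refine ⟨n, Or.inl ⟨?_, ?_⟩⟩
      · by_contra h
        have := Nat.find_min' hx h
        omega
      · rw [hn] at h1; exact h1
  · intro n
    have hp := hpos n
    have hfr : ∃ᶠ k in atTop, limsup (fun k => mu F k (T n)) atTop * (3 / 4) < mu F k (T n) :=
      frequently_lt_of_lt_limsup (mu_cobdd F _) (by linarith)
    refine lt_of_lt_of_le (b := limsup (fun k => mu F k (T n)) atTop / 4) (by positivity) ?_
    refine le_limsup_of_frequently_le (hfr.mono fun k hk => ?_) (mu_bdd F hne _)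
    have h1 := mu_union_le F k (T (n + 1)) (T n \ T (n + 1))
    rw [Set.union_sdiff_cancel (hsub n)] at h1
    have h2 := hmu n k
    have h3 := mu_mono F k (hGsub n)
    linarith
  · refine squeeze_zero (g := fun n => (1 / 2 : ℝ) ^ n) (fun n => ?_) (fun n => ?_)
      (tendsto_pow_atTop_nhds_zero_of_lt_one (by norm_num) (by norm_num))
    · exact le_limsup_of_frequently_le (Frequently.of_forall fun k => mu_nonneg F k _)
        (mu_bdd F hne _)
    · refine le_trans (limsup_le_limsup (Eventually.of_forall fun k => mu_mono F k ?_)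
        (mu_cobdd F _) (mu_bdd F hne _)) (hlim n)
      refine Set.iUnion₂_subset fun j hj => ?_
      rintro x (⟨h1, _⟩ | ⟨h1, _⟩)
      · exact hanti hj.le h1
      · omega
end

section
/- Identifying subsets of ℕ with their characteristic functions in the Cantor space ℕ → Bool (with the product topology), the set {A ∈ ℕ → Bool : μ_n(A) → 0 as n → ∞} corresponding to I(F) is not an F_σ subset of the Cantor space, i.e., it is not equal to a countable union of closed sets. -/
open Filter

/-- `muB F n x = |{i ∈ F n : x i = true}| / |F n|` for `x : ℕ → Bool`. -/
noncomputable def muB (F : ℕ → Finset ℕ) (n : ℕ) (x : ℕ → Bool) : ℝ :=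
  ((F n).filter (fun i => x i = true)).card / (F n).card

theorem muB_le_add (F : ℕ → Finset ℕ) (n : ℕ) (x y z : ℕ → Bool)
    (h : ∀ i ∈ F n, z i = true → x i = true ∨ y i = true) :
    muB F n z ≤ muB F n x + muB F n y := by
  unfold muB
  rw [← add_div]
  gcongr
  rw [← Nat.cast_add]
  refine Nat.cast_le.2 (le_trans (Finset.card_le_card ?_) (Finset.card_union_le _ _))
  intro i hi
  simp only [Finset.mem_filter, Finset.mem_union] at hi ⊢
  rcases h i hi.1 hi.2 with h | h
  · exact Or.inl ⟨hi.1, h⟩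
  · exact Or.inr ⟨hi.1, h⟩

theorem muB_congr (F : ℕ → Finset ℕ) (n : ℕ) (x y : ℕ → Bool)
    (h : ∀ i ∈ F n, x i = y i) : muB F n x = muB F n y := by
  unfold muB
  rw [Finset.filter_congr (q := fun i => y i = true)]
  intro i hi
  rw [h i hi]

theorem muB_nonneg (F : ℕ → Finset ℕ) (n : ℕ) (x : ℕ → Bool) : 0 ≤ muB F n x := by
  unfold muB
  positivity

theorem muB_fin_le (F : ℕ → Finset ℕ) (n : ℕ) (x : ℕ → Bool) (G : Finset ℕ)
    (h : ∀ i, x i = true → i ∈ G) : muB F n x ≤ (G.card : ℝ) / (F n).card := by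
  unfold muB
  gcongr
  intro i hi
  exact h i (Finset.mem_filter.1 hi).2

theorem tend_const (F : ℕ → Finset ℕ)
    (hcard : Tendsto (fun n => (F n).card) atTop atTop) (c : ℝ) :
    Tendsto (fun n => c / ((F n).card : ℝ)) atTop (nhds 0) :=
  Tendsto.const_div_atTop (tendsto_natCast_atTop_atTop.comp hcard) c

theorem muB_fin_tend (F : ℕ → Finset ℕ)
    (hcard : Tendsto (fun n => (F n).card) atTop atTop) (x : ℕ → Bool) (G : Finset ℕ)
    (h : ∀ i, x i = true → i ∈ G) : Tendsto (fun n => muB F n x) atTop (nhds 0) :=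
  squeeze_zero (fun n => muB_nonneg F n x) (fun n => muB_fin_le F n x G h)
    (tend_const F hcard _)

open Classical in
theorem exists_D (F : ℕ → Finset ℕ) (hne : ∀ n, (F n).Nonempty)
    (hcard : Tendsto (fun n => (F n).card) atTop atTop) (ε : ℝ) (hε : 0 < ε) :
    ∃ D : ℕ → Bool, (∀ n, muB F n D ≤ ε) ∧
      ¬ Tendsto (fun n => muB F n D) atTop (nhds 0) := by
  obtain ⟨D, -, hD⟩ := zorn_subset_nonempty
    {D : Set ℕ | ∀ n, muB F n (fun i => decide (i ∈ D)) ≤ ε} (by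
      intro c hc hchain hcne
      refine ⟨⋃₀ c, ?_, fun s hs => Set.subset_sUnion_of_mem hs⟩
      intro n
      obtain ⟨s, hs, hsub⟩ := DirectedOn.exists_mem_subset_of_finset_subset_biUnion
        (f := fun s : Set ℕ => s) (c := c) hcne
        (s := (F n).filter (fun i => i ∈ ⋃₀ c)) (hchain.directedOn) (by
          intro i hi
          have := (Finset.mem_filter.1 (Finset.mem_coe.1 hi)).2
          simpa using this)
      rw [muB_congr F n _ (fun i => decide (i ∈ s))]
      · exact hc hs n
      · intro i hi
        simp only [decide_eq_decide]
        constructor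
        · intro h
          exact hsub (by simpa [hi] using h)
        · intro h
          exact ⟨s, hs, h⟩) ∅ (by
      intro n
      simp [muB, hε.le])
  refine ⟨fun i => decide (i ∈ D), hD.prop, fun ht => ?_⟩
  have h1 := (ht.add (tend_const F hcard 1))
  rw [add_zero] at h1
  obtain ⟨N, hN⟩ := eventually_atTop.1 (h1.eventually_lt_const hε)
  let G := (Finset.range N).biUnion F
  have hG : ∀ p, p ∉ D → p ∈ G := by
    intro p hp
    by_contra hpG
    apply hp
    have hin : insert p D ∈ {D : Set ℕ | ∀ n, muB F n (fun i => decide (i ∈ D)) ≤ ε} := by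
      intro n
      by_cases hn : N ≤ n
      · refine (muB_le_add F n (fun i => decide (i ∈ D)) (fun i => decide (i = p)) _ (by
            intro i _ h
            simp at h ⊢
            tauto)).trans ?_
        have b := muB_fin_le F n (fun i => decide (i = p)) {p} (by simp)
        have c := hN n hn
        simp only [Finset.card_singleton, Nat.cast_one] at b
        linarith
      · rw [muB_congr F n _ (fun i => decide (i ∈ D))]
        · exact hD.prop n
        · intro i hi
          have : i ≠ p := by
            rintro rfl
            exact hpG (Finset.mem_biUnion.2 ⟨n, Finset.mem_range.2 (by omega), hi⟩)
          simp [this]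
    exact hD.le_of_ge hin (Set.subset_insert _ _) (Set.mem_insert _ _)
  have h2 := ht.add (muB_fin_tend F hcard (fun i => decide (i ∈ G)) G (by simp))
  rw [add_zero] at h2
  obtain ⟨n, hn⟩ := (h2.eventually_lt_const one_pos).exists
  have a := muB_le_add F n (fun i => decide (i ∈ D)) (fun i => decide (i ∈ G))
    (fun _ => true) (by
      intro i _ _
      by_cases h : i ∈ D
      · simp [h]
      · simp [hG i h])
  have b : muB F n (fun _ => true) = 1 := by
    have : ((F n).card : ℝ) ≠ 0 := by
      exact_mod_cast (Finset.card_pos.2 (hne n)).ne'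
    simp [muB, this]
  linarith

theorem step_ex (F : ℕ → Finset ℕ) (hne : ∀ n, (F n).Nonempty)
    (hcard : Tendsto (fun n => (F n).card) atTop atTop) (ε : ℝ) (hε : 0 < ε)
    (C : Set (ℕ → Bool)) (hC : IsClosed C)
    (hI : ∀ x ∈ C, Tendsto (fun n => muB F n x) atTop (nhds 0))
    (x : ℕ → Bool) (m : ℕ) :
    ∃ q : (ℕ → Bool) × ℕ, m < q.2 ∧ (∀ i, i < m → q.1 i = x i) ∧
      (∀ i, q.1 i = true → i ∈ Finset.range q.2) ∧
      (∀ n, muB F n q.1 ≤ muB F n x + ε) ∧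
      ∀ z : ℕ → Bool, (∀ i, i < q.2 → z i = q.1 i) → z ∉ C := by
  obtain ⟨D, hD, hDI⟩ := exists_D F hne hcard ε hε
  let y : ℕ → Bool := fun i => if i < m then x i else D i
  have hy : y ∉ C := by
    intro hyC
    apply hDI
    have h2 := (hI y hyC).add (muB_fin_tend F hcard (fun i => decide (i < m))
      (Finset.range m) (by simp))
    rw [add_zero] at h2
    refine squeeze_zero (fun n => muB_nonneg F n D) (fun n => ?_) h2
    apply muB_le_add
    intro i _ h
    by_cases him : i < m <;> simp [y, him, h]
  obtain ⟨I, u, hu, hsub⟩ := isOpen_pi_iff.1 hC.isOpen_compl y hy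
  let m' := max m (I.sup id) + 1
  refine ⟨(fun i => if i < m' then y i else false, m'), ?_, ?_, ?_, ?_, ?_⟩
  · simp only [m']; omega
  · intro i hi
    have : i < m' := by simp only [m']; omega
    simp [this, y, hi]
  · intro i hi
    by_contra h
    simp at h hi
    omega
  · intro n
    refine (muB_le_add F n x D _ ?_).trans (by linarith [hD n])
    intro i _ h
    by_cases him : i < m
    · simp [y, him] at h; exact Or.inl h.2
    · simp [y, him] at h; exact Or.inr h.2
  · intro z hz
    apply hsub
    intro i hi
    have h1 : i ≤ I.sup id := Finset.le_sup (f := id) (Finset.mem_coe.1 hi)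
    have : i < m' := by simp only [m']; omega
    have h2 := hz i this
    simp only [this, if_true] at h2
    rw [h2]
    exact (hu i hi).2

/-- In the Cantor space `ℕ → Bool`, the set corresponding to `I(F)` is not `F_σ`. -/
theorem stmt8 (F : ℕ → Finset ℕ) (hne : ∀ n, (F n).Nonempty)
    (hcard : Tendsto (fun n => (F n).card) atTop atTop) :
    ¬ ∃ C : ℕ → Set (ℕ → Bool), (∀ n, IsClosed (C n)) ∧
      {x : ℕ → Bool | Tendsto (fun n => muB F n x) atTop (nhds 0)} = ⋃ n, C n := by
  rintro ⟨C, hC, hU⟩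
  have hI : ∀ k, ∀ x ∈ C k, Tendsto (fun n => muB F n x) atTop (nhds 0) := by
    intro k x hx
    have : x ∈ {x : ℕ → Bool | Tendsto (fun n => muB F n x) atTop (nhds 0)} := by
      rw [hU]; exact Set.mem_iUnion.2 ⟨k, hx⟩
    exact this
  have hstep := fun (k : ℕ) (p : (ℕ → Bool) × ℕ) =>
    step_ex F hne hcard ((1/2 : ℝ)^k) (by positivity) (C k) (hC k) (hI k) p.1 p.2
  choose g g1 g2 g3 g4 g5 using hstep
  let s : ℕ → (ℕ → Bool) × ℕ := fun k => Nat.rec (fun _ => false, 0) (fun k p => g k p) k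
  have hs : ∀ k, s (k+1) = g k (s k) := fun k => rfl
  have hm : StrictMono (fun k => (s k).2) := strictMono_nat_of_lt_succ (fun k => by
    rw [hs]; exact g1 k (s k))
  have hag : ∀ j k, j ≤ k → ∀ i, i < (s j).2 → (s k).1 i = (s j).1 i := by
    intro j k hjk
    induction k, hjk using Nat.le_induction with
    | base => intros; rfl
    | succ k hk ih =>
      intro i hi
      rw [hs, g2 k (s k) i (lt_of_lt_of_le hi (hm.monotone hk)), ih i hi]
  let A : ℕ → Bool := fun i => (s (i+1)).1 i
  have hA : ∀ j i, i < (s j).2 → A i = (s j).1 i := by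
    intro j i hi
    have h1 : i < (s (i+1)).2 := hm.le_apply (x := i+1)
    rcases le_total j (i+1) with h | h
    · exact hag j (i+1) h i hi
    · exact (hag (i+1) j h i h1).symm
  have hAnot : ∀ k, A ∉ C k := fun k => g5 k (s k) A (fun i hi => hA (k+1) i hi)
  have hfin : ∀ k, Tendsto (fun n => muB F n (s k).1) atTop (nhds 0) := by
    intro k
    cases k with
    | zero => exact muB_fin_tend F hcard _ ∅ (by intro i hi; exact absurd hi (by simp [s]))
    | succ k => exact muB_fin_tend F hcard _ _ (g3 k (s k))
  have hanti : ∀ n, Antitone (fun k => muB F n (s k).1 + 2 * (1/2 : ℝ)^k) := by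
    intro n
    refine antitone_nat_of_succ_le (fun k => ?_)
    have := g4 k (s k) n
    rw [hs, pow_succ]
    linarith
  have hbd : ∀ K n, muB F n A ≤ muB F n (s K).1 + 2 * (1/2 : ℝ)^K := by
    intro K n
    let J := max K ((F n).sup id + 1)
    have e : muB F n A = muB F n (s J).1 := muB_congr F n _ _ (fun i hi => by
      apply hA
      have h1 : i ≤ (F n).sup id := Finset.le_sup (f := id) hi
      have h2 : J ≤ (s J).2 := hm.le_apply
      have h3 : (F n).sup id + 1 ≤ J := le_max_right _ _
      omega)
    have := hanti n (le_max_left K ((F n).sup id + 1) : K ≤ J)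
    have hp : (0:ℝ) < 2 * (1/2 : ℝ)^J := by positivity
    simp only at this
    linarith
  have hAI : A ∈ {x : ℕ → Bool | Tendsto (fun n => muB F n x) atTop (nhds 0)} := by
    refine tendsto_order.2 ⟨fun a ha => Eventually.of_forall fun n =>
      lt_of_lt_of_le ha (muB_nonneg F n A), fun a ha => ?_⟩
    obtain ⟨K, hK⟩ := exists_pow_lt_of_lt_one (show 0 < a / 4 by positivity)
      (show (1/2 : ℝ) < 1 by norm_num)
    filter_upwards [(hfin K).eventually_lt_const (show 0 < a/2 by positivity)] with n hn
    linarith [hbd K n]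
  rw [hU] at hAI
  obtain ⟨k, hk⟩ := Set.mem_iUnion.1 hAI
  exact hAnot k hk
end

section
/- Identifying subsets of ℕ with their characteristic functions in the Cantor space ℕ → Bool (with the product topology), the set {A ∈ ℕ → Bool : μ_n(A) → 0 as n → ∞} corresponding to I(F) is meager in the Cantor space. -/
open Filter

/-- In the Cantor space `ℕ → Bool`, the set corresponding to `I(F)` is meager. -/
theorem stmt10 (F : ℕ → Finset ℕ) (hne : ∀ n, (F n).Nonempty)
    (hcard : Tendsto (fun n => (F n).card) atTop atTop) :
    IsMeagre {x : ℕ → Bool | Tendsto (fun n => muB F n x) atTop (nhds 0)} := by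
  have hcont : ∀ n, Continuous (fun x : ℕ → Bool => muB F n x) := by
    intro n
    have h : (fun x : ℕ → Bool => muB F n x) =
        fun x => (∑ i ∈ F n, (if x i = true then (1:ℝ) else 0)) / (F n).card := by
      funext x
      simp [muB]
    rw [h]
    refine Continuous.div_const ?_ _
    refine continuous_finsetSum _ (fun i _ => ?_)
    exact (continuous_of_discreteTopology (f := fun b : Bool => if b = true then (1:ℝ) else 0)).comp
      (continuous_apply i)
  have hU : ∀ m : ℕ, {x : ℕ → Bool | ∃ n, m ≤ n ∧ 1/3 < muB F n x} ∈ residual (ℕ → Bool) := by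
    intro m
    apply residual_of_dense_open
    · have h : {x : ℕ → Bool | ∃ n, m ≤ n ∧ 1/3 < muB F n x} =
          ⋃ n, ⋃ (_ : m ≤ n), {x | 1/3 < muB F n x} := by
        ext x; simp
      rw [h]
      exact isOpen_iUnion fun n => isOpen_iUnion fun _ => isOpen_lt continuous_const (hcont n)
    · intro x
      have ht : Tendsto (fun k : ℕ => (fun i => if i < k then x i else true : ℕ → Bool))
          atTop (nhds x) := by
        rw [tendsto_pi_nhds]
        intro i
        apply tendsto_const_nhds.congr'
        filter_upwards [eventually_gt_atTop i] with k hk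
        simp [hk]
      refine mem_closure_of_tendsto ht (Eventually.of_forall fun k => ?_)
      obtain ⟨n, hn, hm⟩ := ((hcard.eventually_ge_atTop (2 * k + 1)).and
        (eventually_ge_atTop m)).exists
      refine ⟨n, hm, ?_⟩
      have hpos : (0:ℝ) < (F n).card := by exact_mod_cast (hne n).card_pos
      have hsub : F n \ Finset.range k ⊆
          (F n).filter (fun i => (if i < k then x i else true) = true) := by
        intro i hi
        simp only [Finset.mem_sdiff, Finset.mem_range] at hi
        exact Finset.mem_filter.2 ⟨hi.1, if_neg hi.2⟩
      have h1 := Finset.card_le_card hsub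
      have h2 := Finset.le_card_sdiff (Finset.range k) (F n)
      rw [Finset.card_range] at h2
      have h3 : (F n).card < 3 *
          ((F n).filter (fun i => (if i < k then x i else true) = true)).card := by omega
      have h4 : ((F n).card : ℝ) < 3 *
          ((F n).filter (fun i => (if i < k then x i else true) = true)).card := by
        exact_mod_cast h3
      unfold muB
      rw [lt_div_iff₀ hpos]
      linarith
  have hres := countable_iInter_mem.2 hU
  unfold IsMeagre
  refine mem_of_superset hres ?_
  intro x hx hxt
  have hxt' : Tendsto (fun n => muB F n x) atTop (nhds 0) := hxt
  obtain ⟨m, hm⟩ := eventually_atTop.1 (hxt'.eventually_lt_const (show (0:ℝ) < 1/3 by norm_num))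
  obtain ⟨n, hn, h⟩ := Set.mem_iInter.1 hx m
  exact lt_asymm h (hm n hn)
end
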